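/- For every 1-categorically graded set X there exists a free pre-1-category C_X on X, namely: there is an injective morphism of graded sets ι_X : X → C_X, and for every pre-1-category D and every morphism of 1-categorically graded sets F : X → D (into the underlying graded set of D), F factors uniquely through ι_X, i.e. there is a unique morphism of pre-1-categories F̃ : C_X → D with F̃ ∘ ι_X = F. Equivalently, the assignment X ↦ C_X is left adjoint to the forgetful functor from the category of pre-1-categories to the category of 1-categorically graded sets. -/

import Mathlib

universe u v w

/-- A 1-categorically graded set: a set with source and target maps satisfying
`ρ₀ ∘ σ₀ = σ₀` for all `ρ₀, σ₀ ∈ {s₀, t₀}`. -/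
structure Gr1Str (S : Type u) where
  s0 : S → S
  t0 : S → S
  s0_s0 : ∀ a, s0 (s0 a) = s0 a
  t0_s0 : ∀ a, t0 (s0 a) = s0 a
  s0_t0 : ∀ a, s0 (t0 a) = t0 a
  t0_t0 : ∀ a, t0 (t0 a) = t0 a

/-- A morphism of 1-categorically graded sets. -/
structure Gr1Hom {S : Type u} {T : Type v} (A : Gr1Str S) (B : Gr1Str T) where
  toFun : S → T
  map_s0 : ∀ a, toFun (A.s0 a) = B.s0 (toFun a)
  map_t0 : ∀ a, toFun (A.t0 a) = B.t0 (toFun a)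

/-- A pre-1-category: a 1-categorically graded set with a partial composition `*₀`,
defined exactly on pairs `(a, b)` with `s₀ a = t₀ b`. -/
structure Pre1Str (S : Type u) extends Gr1Str S where
  comp0 : (a b : S) → s0 a = t0 b → S
  s0_comp0 : ∀ a b (h : s0 a = t0 b), s0 (comp0 a b h) = s0 b
  t0_comp0 : ∀ a b (h : s0 a = t0 b), t0 (comp0 a b h) = t0 a

/-- A morphism of pre-1-categories. -/
structure Pre1Hom {S : Type u} {T : Type v} (A : Pre1Str S) (B : Pre1Str T) extends
    Gr1Hom A.toGr1Str B.toGr1Str where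
  map_comp0 : ∀ a b (h : A.s0 a = A.t0 b) (h' : B.s0 (toFun a) = B.t0 (toFun b)),
    toFun (A.comp0 a b h) = B.comp0 (toFun a) (toFun b) h'

namespace Gr1Str

variable {X : Type u} {G : Gr1Str X}

/-- Formal composites of elements of a graded set, indexed by source and target. -/
inductive Term (G : Gr1Str X) : X → X → Type u
  | of (x : X) : Term G (G.s0 x) (G.t0 x)
  | comp {a b c : X} (f : Term G b c) (g : Term G a b) : Term G a c

namespace Term

/-- The leftmost generator of a formal composite. -/
def head {a b : X} : Term G a b → X
  | of x => x
  | comp f _ => f.head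

theorem s0_src {a b : X} (f : Term G a b) : G.s0 a = a := by
  induction f with
  | of x => exact G.s0_s0 x
  | comp _ _ _ ih => exact ih

theorem t0_src {a b : X} (f : Term G a b) : G.t0 a = a := by
  induction f with
  | of x => exact G.t0_s0 x
  | comp _ _ _ ih => exact ih

theorem s0_tgt {a b : X} (f : Term G a b) : G.s0 b = b := by
  induction f with
  | of x => exact G.s0_t0 x
  | comp _ _ ih _ => exact ih

theorem t0_tgt {a b : X} (f : Term G a b) : G.t0 b = b := by
  induction f with
  | of x => exact G.t0_t0 x
  | comp _ _ ih _ => exact ih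

/-- Evaluation of a formal composite in a pre-1-category. -/
def eval {D : Type v} {DD : Pre1Str D} (F : Gr1Hom G DD.toGr1Str) {a b : X} :
    Term G a b → {d : D // DD.s0 d = F.toFun a ∧ DD.t0 d = F.toFun b}
  | of x => ⟨F.toFun x, (F.map_s0 x).symm, (F.map_t0 x).symm⟩
  | comp f g =>
    ⟨DD.comp0 (f.eval F).1 (g.eval F).1 ((f.eval F).2.1.trans (g.eval F).2.2.symm),
      (DD.s0_comp0 _ _ _).trans (g.eval F).2.1, (DD.t0_comp0 _ _ _).trans (f.eval F).2.2⟩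

end Term

/-- The elements of the free pre-1-category on a graded set. -/
structure FreeCell (G : Gr1Str X) where
  src : X
  tgt : X
  term : Term G src tgt

namespace FreeCell

/-- The inclusion of generators. -/
def of (G : Gr1Str X) (x : X) : FreeCell G := ⟨G.s0 x, G.t0 x, Term.of x⟩

theorem of_injective : Function.Injective (of G) :=
  Function.LeftInverse.injective (g := fun p : FreeCell G => p.term.head) fun _ => rfl

/-- Composition of cells with matching boundary. -/
def comp (p q : FreeCell G) (h : p.src = q.tgt) : FreeCell G :=
  ⟨q.src, p.tgt, Term.comp (h ▸ p.term) q.term⟩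

/-- The free pre-1-category on a graded set. -/
def pre1Str (G : Gr1Str X) : Pre1Str (FreeCell G) where
  s0 p := of G p.src
  t0 p := of G p.tgt
  s0_s0 p := congrArg (of G) p.term.s0_src
  t0_s0 p := congrArg (of G) p.term.t0_src
  s0_t0 p := congrArg (of G) p.term.s0_tgt
  t0_t0 p := congrArg (of G) p.term.t0_tgt
  comp0 p q h := comp p q (of_injective h)
  s0_comp0 _ _ _ := rfl
  t0_comp0 _ _ _ := rfl

/-- The inclusion of generators as a morphism of graded sets. -/
def ι (G : Gr1Str X) : Gr1Hom G (pre1Str G).toGr1Str where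
  toFun := of G
  map_s0 _ := rfl
  map_t0 _ := rfl

/-- The extension of a morphism of graded sets to the free pre-1-category. -/
def lift {D : Type v} {DD : Pre1Str D} (F : Gr1Hom G DD.toGr1Str) :
    Pre1Hom (pre1Str G) DD where
  toFun p := (p.term.eval F).1
  map_s0 p := (p.term.eval F).2.1.symm
  map_t0 p := (p.term.eval F).2.2.symm
  map_comp0 := by
    rintro ⟨b, c, f⟩ ⟨a, b', g⟩ h h'
    obtain rfl : b = b' := of_injective h
    rfl

theorem toFun_eq_eval {D : Type v} {DD : Pre1Str D} {F : Gr1Hom G DD.toGr1Str}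
    (H : Pre1Hom (pre1Str G) DD) (hH : ∀ x, H.toFun (of G x) = F.toFun x)
    {a b : X} (f : Term G a b) : H.toFun ⟨a, b, f⟩ = (f.eval F).1 := by
  induction f with
  | of x => exact hH x
  | @comp a b c f g ihf ihg =>
    have hfg : DD.s0 (H.toFun ⟨b, c, f⟩) = DD.t0 (H.toFun ⟨a, b, g⟩) := by
      rw [← H.map_s0, ← H.map_t0]
      rfl
    refine (H.map_comp0 ⟨b, c, f⟩ ⟨a, b, g⟩ rfl hfg).trans ?_
    simp only [Term.eval, ihf, ihg]

end FreeCell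

end Gr1Str

theorem Pre1Hom.ext_toFun {S : Type u} {T : Type v} {A : Pre1Str S} {B : Pre1Str T}
    {H K : Pre1Hom A B} (h : ∀ a, H.toFun a = K.toFun a) : H = K := by
  obtain ⟨⟨f, _, _⟩, _⟩ := H
  obtain ⟨⟨g, _, _⟩, _⟩ := K
  obtain rfl : f = g := funext h
  rfl

/-- For every 1-categorically graded set `X` there exists a free
pre-1-category `C_X` on `X`: an injective morphism of graded sets `ι_X : X → C_X` such that
every morphism of 1-categorically graded sets `F : X → D` into a pre-1-category `D` factors
uniquely through `ι_X` via a morphism of pre-1-categories `F̃ : C_X → D`; equivalently,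
`X ↦ C_X` is left adjoint to the forgetful functor from pre-1-categories to
1-categorically graded sets. -/
theorem statement0 {X1 : Type u} (G : Gr1Str X1) :
    ∃ (Cc : Type u) (CC : Pre1Str Cc) (iota : Gr1Hom G CC.toGr1Str),
      Function.Injective iota.toFun ∧
      ∀ (D : Type u) (DD : Pre1Str D) (F : Gr1Hom G DD.toGr1Str),
        ∃! Ft : Pre1Hom CC DD, ∀ x, Ft.toFun (iota.toFun x) = F.toFun x := by
  refine ⟨Gr1Str.FreeCell G, Gr1Str.FreeCell.pre1Str G, Gr1Str.FreeCell.ι G,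
    Gr1Str.FreeCell.of_injective, fun D DD F => ⟨Gr1Str.FreeCell.lift F, fun _ => rfl, ?_⟩⟩
  exact fun H hH => Pre1Hom.ext_toFun fun p => Gr1Str.FreeCell.toFun_eq_eval H hH p.term
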